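/- arXiv:2511.13140 — 2 statements merged into one kernel-verified Lean document; each statement's English description precedes it below -/
import Mathlib

section
/- For every l ≥ 1, the complete cubic Halin graph G_l has star chromatic index exactly 5: G_l admits a star 5-edge coloring but admits no star 4-edge coloring. -/
/-- A star `k`-edge coloring of a simple graph `G`: a proper edge coloring with colors
`0, …, k-1` such that the edges of every path of length 4 and of every cycle of length 4
receive at least 3 distinct colors. -/
def IsStarEdgeColoring {V : Type*} (G : SimpleGraph V) (k : ℕ) (c : Sym2 V → ℕ) : Prop :=
  (∀ e ∈ G.edgeSet, c e < k) ∧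
  (∀ a b b' : V, G.Adj a b → G.Adj a b' → b ≠ b' → c s(a, b) ≠ c s(a, b')) ∧
  (∀ v0 v1 v2 v3 v4 : V, ([v0, v1, v2, v3, v4] : List V).Nodup →
    G.Adj v0 v1 → G.Adj v1 v2 → G.Adj v2 v3 → G.Adj v3 v4 →
    3 ≤ ({c s(v0, v1), c s(v1, v2), c s(v2, v3), c s(v3, v4)} : Finset ℕ).card) ∧
  (∀ v0 v1 v2 v3 : V, ([v0, v1, v2, v3] : List V).Nodup →
    G.Adj v0 v1 → G.Adj v1 v2 → G.Adj v2 v3 → G.Adj v3 v0 →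
    3 ≤ ({c s(v0, v1), c s(v1, v2), c s(v2, v3), c s(v3, v0)} : Finset ℕ).card)

/-- Vertices of the complete cubic Halin graph `G_l`: the root (`none`), and for
each `1 ≤ j ≤ l` the level-`j` vertices `some ⟨(a, bs), _⟩` with `a : Fin 3` and
`bs : List (Fin 2)` of length `j - 1` (so `bs.length < l`). -/
abbrev HalinVert (l : ℕ) := Option { p : Fin 3 × List (Fin 2) // p.2.length < l }

/-- The value of a binary string, most significant digit first. -/
def binVal (bs : List (Fin 2)) : ℕ := bs.foldl (fun n b => 2 * n + b.val) 0

/-- The position of a leaf `(a, bs)` in the lexicographic order of leaf indices. -/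
def leafIdx (l : ℕ) (p : Fin 3 × List (Fin 2)) : ℕ := p.1.val * 2 ^ (l - 1) + binVal p.2

/-- Base adjacency relation for `G_l`: the root is adjacent to the three level-1
vertices; every non-leaf vertex is adjacent to its two children (obtained by
appending an element of `Fin 2` to its index); and the leaves (whose index lists
have length `l - 1`) are joined in a cycle following the lexicographic order of
their indices. -/
def halinRel (l : ℕ) : HalinVert l → HalinVert l → Prop
  | none, some q => q.1.2 = []
  | some p, some q =>
      (∃ d : Fin 2, q.1.1 = p.1.1 ∧ q.1.2 = p.1.2 ++ [d]) ∨
      (p.1.2.length = l - 1 ∧ q.1.2.length = l - 1 ∧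
        (leafIdx l q.1 = leafIdx l p.1 + 1 ∨
          (leafIdx l p.1 = 3 * 2 ^ (l - 1) - 1 ∧ leafIdx l q.1 = 0)))
  | _, _ => False

/-- The complete cubic Halin graph `G_l`, whose characteristic tree is the complete
tree `T_l` with `l` levels. -/
def completeHalin (l : ℕ) : SimpleGraph (HalinVert l) := SimpleGraph.fromRel (halinRel l)

/-! ### Star edge colorings and bi-colored walks -/

theorem three_le_card_of_not_alternating {a b c d : ℕ} (hab : a ≠ b) (hbc : b ≠ c) (hcd : c ≠ d)
    (h : ¬ (a = c ∧ b = d)) : 3 ≤ ({a, b, c, d} : Finset ℕ).card := by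
  by_cases hac : a = c
  · subst hac
    have hbd : b ≠ d := fun hbd => h ⟨rfl, hbd⟩
    calc 3 = ({a, b, d} : Finset ℕ).card :=
        (Finset.card_eq_three.2 ⟨a, b, d, hab, hcd, hbd, rfl⟩).symm
      _ ≤ _ := Finset.card_le_card (by intro x; simp; tauto)
  · calc 3 = ({a, b, c} : Finset ℕ).card :=
        (Finset.card_eq_three.2 ⟨a, b, c, hab, hac, hbc, rfl⟩).symm
      _ ≤ _ := Finset.card_le_card (by simp)

theorem not_three_le_card_alternating (a b : ℕ) : ¬ 3 ≤ ({a, b, a, b} : Finset ℕ).card := by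
  have h : ({a, b, a, b} : Finset ℕ) = {a, b} := by ext x; simp
  have := Finset.card_le_two (a := a) (b := b)
  rw [h]; omega

/-- If `K v` contains all colors at `v`, then being a star edge coloring can be checked on pairs
of edges with a common end. -/
theorem isStarEdgeColoring_of_local {V : Type*} {G : SimpleGraph V} {k : ℕ} {c : Sym2 V → ℕ}
    (K : V → List ℕ) (hK : ∀ v w, G.Adj v w → c s(v, w) < k ∧ c s(v, w) ∈ K v)
    (h : ∀ v x y, G.Adj v x → G.Adj v y → x ≠ y → c s(v, x) ≠ c s(v, y) ∧
      (c s(v, y) ∉ K x ∨ c s(v, x) ∉ K y)) :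
    IsStarEdgeColoring G k c := by
  have key : ∀ v0 v1 v2 v3 v4 : V, v0 ≠ v2 → v1 ≠ v3 → v2 ≠ v4 →
      G.Adj v0 v1 → G.Adj v1 v2 → G.Adj v2 v3 → G.Adj v3 v4 →
      3 ≤ ({c s(v0, v1), c s(v1, v2), c s(v2, v3), c s(v3, v4)} : Finset ℕ).card := by
    intro v0 v1 v2 v3 v4 h02 h13 h24 a01 a12 a23 a34
    have e1 := (h v1 v0 v2 a01.symm a12 h02).1
    have e2 := h v2 v1 v3 a12.symm a23 h13
    have e3 := (h v3 v2 v4 a23.symm a34 h24).1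
    have m1 := (hK v1 v0 a01.symm).2
    have m3 := (hK v3 v4 a34).2
    rw [Sym2.eq_swap] at e1 m1
    rw [Sym2.eq_swap (a := v2) (b := v1)] at e2
    rw [Sym2.eq_swap (a := v3) (b := v2)] at e3
    refine three_le_card_of_not_alternating e1 e2.1 e3 ?_
    rintro ⟨h1, h2⟩
    rw [h1] at m1
    rw [← h2] at m3
    tauto
  refine ⟨?_, fun a b b' hb hb' hne => (h a b b' hb hb' hne).1, ?_, ?_⟩
  · intro e
    induction e with | _ v w => exact fun he => (hK v w he).1
  · intro v0 v1 v2 v3 v4 hn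
    simp only [List.nodup_cons, List.mem_cons, List.not_mem_nil, not_or] at hn
    exact key v0 v1 v2 v3 v4 (by tauto) (by tauto) (by tauto)
  · intro v0 v1 v2 v3 hn
    simp only [List.nodup_cons, List.mem_cons, List.not_mem_nil, not_or] at hn
    exact key v0 v1 v2 v3 v0 (by tauto) (by tauto) (fun h => by simp [h] at hn)

theorem IsStarEdgeColoring.not_alternating {V : Type*} {G : SimpleGraph V} {k : ℕ}
    {c : Sym2 V → ℕ} (hc : IsStarEdgeColoring G k c) {v0 v1 v2 v3 v4 : V}
    (h02 : v0 ≠ v2) (h13 : v1 ≠ v3) (h24 : v2 ≠ v4)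
    (a01 : G.Adj v0 v1) (a12 : G.Adj v1 v2) (a23 : G.Adj v2 v3) (a34 : G.Adj v3 v4) :
    ¬ (c s(v0, v1) = c s(v2, v3) ∧ c s(v1, v2) = c s(v3, v4)) := by
  obtain ⟨-, hp, h4, hcyc⟩ := hc
  rintro ⟨h1, h2⟩
  have n01 := a01.ne
  have n12 := a12.ne
  have n23 := a23.ne
  have n34 := a34.ne
  by_cases h03 : v0 = v3
  · subst h03
    have := hp v0 v1 v2 a01 a23.symm n12
    rw [Sym2.eq_swap (a := v2) (b := v0)] at h1
    exact this h1
  by_cases h14 : v1 = v4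
  · subst h14
    have := hp v1 v2 v3 a12 a34.symm n23
    rw [Sym2.eq_swap (a := v3) (b := v1)] at h2
    exact this h2
  by_cases h04 : v0 = v4
  · subst h04
    have := hcyc v0 v1 v2 v3 (by simp; tauto) a01 a12 a23 a34
    rw [h1, h2] at this
    exact not_three_le_card_alternating _ _ this
  · have := h4 v0 v1 v2 v3 v4 (by simp; tauto) a01 a12 a23 a34
    rw [h1, h2] at this
    exact not_three_le_card_alternating _ _ this

/-! ### Cubic graphs with a triangle have no star 4-edge coloring -/

theorem eq_of_lt_four {x y z a b : ℕ} (hx : x < 4) (hy : y < 4) (hz : z < 4) (ha : a < 4)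
    (hb : b < 4) (hxy : x ≠ y) (hxz : x ≠ z) (hyz : y ≠ z) (hxa : x ≠ a) (hya : y ≠ a)
    (hza : z ≠ a) (hxb : x ≠ b) (hyb : y ≠ b) (hzb : z ≠ b) : a = b := by
  omega

/-- In a star 4-edge coloring, the edge hanging off a triangle at `a` does not have the color of
the opposite edge, provided its outer end has two further neighbors. -/
theorem IsStarEdgeColoring.pendant_ne_opposite {V : Type*} {G : SimpleGraph V}
    {c : Sym2 V → ℕ} (hc : IsStarEdgeColoring G 4 c) {a b d a' y z : V}
    (hab : G.Adj a b) (hbd : G.Adj b d) (hda : G.Adj d a) (haa' : G.Adj a a')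
    (hb : a' ≠ b) (hd : a' ≠ d) (hy : G.Adj a' y) (hz : G.Adj a' z) (hya : y ≠ a) (hza : z ≠ a)
    (hyz : y ≠ z) : c s(a, a') ≠ c s(b, d) := by
  intro h
  have hlt : ∀ {v w}, G.Adj v w → c s(v, w) < 4 := fun hvw => hc.1 _ hvw
  have far : ∀ u, G.Adj a' u → u ≠ a → c s(a', u) ≠ c s(a, b) ∧ c s(a', u) ≠ c s(d, a) ∧
      c s(a', u) ≠ c s(a, a') := by
    intro u hu hua
    have h1 := hc.not_alternating hua hb hda.ne.symm hu.symm haa'.symm hab hbd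
    have h2 := hc.not_alternating hua hd hab.ne hu.symm haa'.symm hda.symm hbd.symm
    have h3 := hc.2.1 a' u a hu haa'.symm hua
    simp only [Sym2.eq_swap (a := u) (b := a'), Sym2.eq_swap (a := a') (b := a),
      Sym2.eq_swap (a := a) (b := d), Sym2.eq_swap (a := d) (b := b)] at h1 h2 h3
    tauto
  have fy := far y hy hya
  have fz := far z hz hza
  have p1 := hc.2.1 a' y z hy hz hyz
  have p2 := hc.2.1 a b d hab hda.symm hbd.ne
  have p3 := hc.2.1 a b a' hab haa' hb.symm
  have p4 := hc.2.1 a d a' hda.symm haa' hd.symm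
  rw [Sym2.eq_swap (a := a) (b := d)] at p2 p4
  have := hlt hy
  have := hlt hz
  have := hlt hab
  have := hlt hda
  have := hlt haa'
  omega

theorem not_isStarEdgeColoring_four_of_triangle {V : Type*} {G : SimpleGraph V}
    (hG : ∀ v, ∃ x y z, G.Adj v x ∧ G.Adj v y ∧ G.Adj v z ∧ x ≠ y ∧ x ≠ z ∧ y ≠ z)
    {a b d : V} (hab : G.Adj a b) (hbd : G.Adj b d) (hda : G.Adj d a) (c : Sym2 V → ℕ) :
    ¬ IsStarEdgeColoring G 4 c := by
  intro hc
  have third : ∀ u v w : V, ∃ u', G.Adj u u' ∧ u' ≠ v ∧ u' ≠ w := by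
    intro u v w
    obtain ⟨x, y, z, hx, hy, hz, hxy, hxz, hyz⟩ := hG u
    by_cases h1 : x ≠ v ∧ x ≠ w
    · exact ⟨x, hx, h1⟩
    by_cases h2 : y ≠ v ∧ y ≠ w
    · exact ⟨y, hy, h2⟩
    exact ⟨z, hz, by grind⟩
  have two : ∀ u v : V, ∃ y z, G.Adj u y ∧ G.Adj u z ∧ y ≠ v ∧ z ≠ v ∧ y ≠ z := by
    intro u v
    obtain ⟨y, hy, hyv, -⟩ := third u v v
    obtain ⟨z, hz, hzv, hzy⟩ := third u v y
    exact ⟨y, z, hy, hz, hyv, hzv, hzy.symm⟩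
  have opp : ∀ a b d a' : V, G.Adj a b → G.Adj b d → G.Adj d a → G.Adj a a' → a' ≠ b → a' ≠ d →
      c s(a, a') ≠ c s(b, d) := by
    intro a b d a' h1 h2 h3 h4 h5 h6
    obtain ⟨y, z, hy, hz, hya, hza, hyz⟩ := two a' a
    exact hc.pendant_ne_opposite h1 h2 h3 h4 h5 h6 hy hz hya hza hyz
  have hlt : ∀ {v w}, G.Adj v w → c s(v, w) < 4 := fun hvw => hc.1 _ hvw
  obtain ⟨a', ha', hab', had'⟩ := third a b d
  obtain ⟨b', hb', hba', hbd'⟩ := third b a d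
  obtain ⟨d', hd', hda', hdb'⟩ := third d a b
  obtain ⟨y, z, hy, hz, hya, hza, hyz⟩ := two a' a
  have oa := opp a b d a' hab hbd hda ha' hab' had'
  have ob := opp b d a b' hbd hda hab hb' hbd' hba'
  have od := opp d a b d' hda hab hbd hd' hda' hdb'
  have p0 := hc.2.1 a b d hab hda.symm hbd.ne
  have p1 := hc.2.1 a b a' hab ha' hab'.symm
  have p2 := hc.2.1 a d a' hda.symm ha' had'.symm
  have p3 := hc.2.1 b a b' hab.symm hb' hba'.symm
  have p4 := hc.2.1 b d b' hbd hb' hbd'.symm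
  have p5 := hc.2.1 d a d' hda hd' hda'.symm
  have p6 := hc.2.1 d b d' hbd.symm hd' hdb'.symm
  have p7 := hc.2.1 b a d hab.symm hbd hda.ne.symm
  have p8 := hc.2.1 d a b hda hbd.symm hab.ne
  have far : ∀ u, G.Adj a' u → u ≠ a → ¬ (c s(a', u) = c s(a, b) ∧ c s(a, a') = c s(b, b')) ∧
      ¬ (c s(a', u) = c s(d, a) ∧ c s(a, a') = c s(d, d')) ∧ c s(a', u) ≠ c s(a, a') := by
    intro u hu hua
    have h1 := hc.not_alternating hua hab' hba'.symm hu.symm ha'.symm hab hb'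
    have h2 := hc.not_alternating hua had' hda'.symm hu.symm ha'.symm hda.symm hd'
    have h3 := hc.2.1 a' u a hu ha'.symm hua
    simp only [Sym2.eq_swap (a := u) (b := a'), Sym2.eq_swap (a := a') (b := a),
      Sym2.eq_swap (a := a) (b := d)] at h1 h2 h3
    exact ⟨h1, h2, h3⟩
  have fy := far y hy hya
  have fz := far z hz hza
  have p9 := hc.2.1 a' y z hy hz hyz
  simp only [Sym2.eq_swap (a := b) (b := a), Sym2.eq_swap (a := a) (b := d),
    Sym2.eq_swap (a := d) (b := b)] at *
  have hx := hlt hab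
  have hw := hlt hda
  have ht := hlt hbd
  have e1 : c s(a, a') = c s(b, b') :=
    eq_of_lt_four hx hw ht (hlt ha') (hlt hb') p0 p7 p8 p1 p2 oa.symm p3 ob.symm p4
  have e2 : c s(a, a') = c s(d, d') :=
    eq_of_lt_four hx hw ht (hlt ha') (hlt hd') p0 p7 p8 p1 p2 oa.symm od.symm p5 p6
  exact p9 (eq_of_lt_four hx hw (hlt ha') (hlt hy) (hlt hz) p0 p1 p2 (by tauto) (by tauto)
    (by tauto) (by tauto) (by tauto) (by tauto))

/-! ### Heap numbering of the vertices

The root gets number `1`, the level-1 vertices `3, 4, 5`, and the children of the vertex with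
number `n ≥ 3` get the numbers `2 * n` and `2 * n + 1`. The leaves of `G_l` thus get the numbers
`L, …, 2 * L - 1` in lexicographic order, where `L = 3 * 2 ^ (l - 1)`. -/

def heapIdx (p : Fin 3 × List (Fin 2)) : ℕ := p.2.foldl (fun n b => 2 * n + b.val) (3 + p.1.val)

def heapNum {l : ℕ} : HalinVert l → ℕ
  | none => 1
  | some p => heapIdx p.1

theorem heapIdx_nil (a : Fin 3) : heapIdx (a, []) = 3 + a := rfl

theorem heapIdx_append (a : Fin 3) (bs : List (Fin 2)) (d : Fin 2) :
    heapIdx (a, bs ++ [d]) = 2 * heapIdx (a, bs) + d := by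
  simp [heapIdx]

theorem binVal_append (bs : List (Fin 2)) (d : Fin 2) :
    binVal (bs ++ [d]) = 2 * binVal bs + d := by
  simp [binVal]

theorem binVal_lt (bs : List (Fin 2)) : binVal bs < 2 ^ bs.length := by
  induction bs using List.reverseRecOn with
  | nil => simp [binVal]
  | append_singleton bs d ih =>
    rw [binVal_append, List.length_append, List.length_singleton, pow_succ]
    omega

theorem heapIdx_eq (a : Fin 3) (bs : List (Fin 2)) :
    heapIdx (a, bs) = (3 + a) * 2 ^ bs.length + binVal bs := by
  induction bs using List.reverseRecOn with
  | nil => simp [binVal, heapIdx]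
  | append_singleton bs d ih =>
    rw [binVal_append, List.length_append, List.length_singleton, pow_succ, heapIdx_append, ih]
    ring

theorem heapIdx_bounds (p : Fin 3 × List (Fin 2)) :
    3 * 2 ^ p.2.length ≤ heapIdx p ∧ heapIdx p < 6 * 2 ^ p.2.length := by
  obtain ⟨a, bs⟩ := p
  have h := binVal_lt bs
  rw [heapIdx_eq]
  fin_cases a <;> simp <;> omega

theorem three_le_heapIdx (p : Fin 3 × List (Fin 2)) : 3 ≤ heapIdx p := by
  have := (heapIdx_bounds p).1
  have : 0 < 2 ^ p.2.length := by positivity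
  omega

theorem heapIdx_injective : Function.Injective heapIdx := by
  rintro ⟨a, bs⟩ ⟨a', bs'⟩ h
  induction bs using List.reverseRecOn generalizing bs' with
  | nil =>
    rcases bs'.eq_nil_or_concat with rfl | ⟨bs', d', rfl⟩
    · rw [heapIdx_nil, heapIdx_nil] at h
      rw [Fin.ext (by omega : a.val = a'.val)]
    · rw [heapIdx_nil, List.concat_eq_append, heapIdx_append] at h
      have := three_le_heapIdx (a', bs')
      omega
  | append_singleton bs d ih =>
    rw [heapIdx_append] at h
    rcases bs'.eq_nil_or_concat with rfl | ⟨bs', d', rfl⟩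
    · rw [heapIdx_nil] at h
      have := three_le_heapIdx (a, bs)
      omega
    · rw [List.concat_eq_append, heapIdx_append] at h
      have := ih bs' (by omega)
      rw [Prod.mk.injEq] at this
      rw [List.concat_eq_append, this.1, this.2, Fin.ext (by omega : d.val = d'.val)]

theorem exists_heapIdx_eq (n : ℕ) (hn : 3 ≤ n) : ∃ p, heapIdx p = n := by
  induction n using Nat.strong_induction_on with
  | _ n ih =>
    by_cases h6 : n < 6
    · exact ⟨(⟨n - 3, by omega⟩, []), by rw [heapIdx_nil]; simp; omega⟩
    · obtain ⟨⟨a, bs⟩, hp⟩ := ih (n / 2) (by omega) (by omega)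
      exact ⟨(a, bs ++ [⟨n % 2, by omega⟩]), by rw [heapIdx_append, hp]; simp; omega⟩

def IsHeapNum (L n : ℕ) : Prop := n = 1 ∨ 3 ≤ n ∧ n < 2 * L

instance (L n : ℕ) : Decidable (IsHeapNum L n) := inferInstanceAs (Decidable (_ ∨ _))

theorem two_mul_leafStart {l : ℕ} (hl : 1 ≤ l) : 2 * (3 * 2 ^ (l - 1)) = 3 * 2 ^ l := by
  obtain ⟨k, rfl⟩ := Nat.exists_eq_add_of_le' hl
  simp [pow_succ]; ring

theorem heapNum_injective {l : ℕ} : Function.Injective (heapNum (l := l)) := by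
  rintro (_ | p) (_ | q) h
  · rfl
  · have : 1 = heapIdx q.1 := h
    have := three_le_heapIdx q.1
    omega
  · have : heapIdx p.1 = 1 := h
    have := three_le_heapIdx p.1
    omega
  · rw [Subtype.ext (heapIdx_injective h)]

theorem leaf_iff {l : ℕ} (hl : 1 ≤ l) (p : Fin 3 × List (Fin 2)) (hp : p.2.length < l) :
    p.2.length = l - 1 ↔ 3 * 2 ^ (l - 1) ≤ heapIdx p := by
  constructor
  · intro h
    rw [← h]
    exact (heapIdx_bounds p).1
  · intro h
    by_contra hne
    have h1 := (heapIdx_bounds p).2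
    have h2 : 2 ^ (p.2.length + 1) ≤ 2 ^ (l - 1) := Nat.pow_le_pow_right (by omega) (by omega)
    rw [pow_succ] at h2
    omega

theorem isHeapNum_heapNum {l : ℕ} (hl : 1 ≤ l) (v : HalinVert l) :
    IsHeapNum (3 * 2 ^ (l - 1)) (heapNum v) := by
  rcases v with _ | ⟨p, hp⟩
  · exact Or.inl rfl
  · refine Or.inr ⟨three_le_heapIdx p, ?_⟩
    have h1 := (heapIdx_bounds p).2
    have h2 : 2 ^ p.2.length ≤ 2 ^ (l - 1) := Nat.pow_le_pow_right (by omega) (by omega)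
    simp only [heapNum]
    omega

theorem exists_heapNum_eq {l n : ℕ} (hl : 1 ≤ l) (hn : IsHeapNum (3 * 2 ^ (l - 1)) n) :
    ∃ v : HalinVert l, heapNum v = n := by
  rcases hn with rfl | ⟨h3, hn⟩
  · exact ⟨none, rfl⟩
  · obtain ⟨p, rfl⟩ := exists_heapIdx_eq n h3
    refine ⟨some ⟨p, ?_⟩, rfl⟩
    rw [two_mul_leafStart hl] at hn
    have h1 := (heapIdx_bounds p).1
    exact (Nat.pow_lt_pow_iff_right (a := 2) (by omega)).1 (by omega)

def heapParent (n : ℕ) : ℕ := if n < 6 then 1 else n / 2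

/-- The relation `halinRel` in terms of heap numbers. -/
def HeapRel (L m n : ℕ) : Prop :=
  (3 ≤ n ∧ m = heapParent n) ∨ (L ≤ m ∧ L ≤ n ∧ (n = m + 1 ∨ (m + 1 = 2 * L ∧ n = L)))

theorem isChild_iff (p q : Fin 3 × List (Fin 2)) :
    (∃ d : Fin 2, q.1 = p.1 ∧ q.2 = p.2 ++ [d]) ↔ heapIdx p = heapParent (heapIdx q) := by
  obtain ⟨a, bs⟩ := p
  obtain ⟨a', bs'⟩ := q
  have h3 := three_le_heapIdx (a, bs)
  rcases bs'.eq_nil_or_concat with rfl | ⟨bs', d', rfl⟩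
  · rw [heapIdx_nil, heapParent, if_pos (by omega)]
    simp; omega
  · have h3' := three_le_heapIdx (a', bs')
    rw [List.concat_eq_append, heapIdx_append, heapParent, if_neg (by omega),
      show (2 * heapIdx (a', bs') + d'.val) / 2 = heapIdx (a', bs') by omega,
      heapIdx_injective.eq_iff]
    simp only [Prod.mk.injEq, List.append_singleton_inj]
    constructor
    · rintro ⟨d, rfl, rfl, rfl⟩
      exact ⟨rfl, rfl⟩
    · rintro ⟨rfl, rfl⟩
      exact ⟨d', rfl, rfl, rfl⟩

theorem eq_nil_iff_heapParent (q : Fin 3 × List (Fin 2)) :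
    q.2 = [] ↔ 1 = heapParent (heapIdx q) := by
  obtain ⟨a, bs⟩ := q
  rcases bs.eq_nil_or_concat with rfl | ⟨bs, d, rfl⟩
  · rw [heapIdx_nil, heapParent, if_pos (by omega)]
    simp
  · have := three_le_heapIdx (a, bs)
    rw [List.concat_eq_append, heapIdx_append, heapParent, if_neg (by omega)]
    simp; omega

theorem halinRel_iff {l : ℕ} (hl : 1 ≤ l) (v w : HalinVert l) :
    halinRel l v w ↔ HeapRel (3 * 2 ^ (l - 1)) (heapNum v) (heapNum w) := by
  have hL : 0 < 2 ^ (l - 1) := by positivity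
  rcases v with _ | ⟨p, hp⟩ <;> rcases w with _ | ⟨q, hq⟩
  · change False ↔ HeapRel _ 1 1
    rw [HeapRel, false_iff]; omega
  · change q.2 = [] ↔ HeapRel _ 1 (heapIdx q)
    have := three_le_heapIdx q
    rw [eq_nil_iff_heapParent, HeapRel]; omega
  · change False ↔ HeapRel _ (heapIdx p) 1
    rw [HeapRel, false_iff]; omega
  · have h3 := three_le_heapIdx q
    change _ ∨ _ ↔ HeapRel _ (heapIdx p) (heapIdx q)
    dsimp only
    rw [isChild_iff, leaf_iff hl p hp, leaf_iff hl q hq, HeapRel]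
    have key : ∀ r : Fin 3 × List (Fin 2), r.2.length < l → 3 * 2 ^ (l - 1) ≤ heapIdx r →
        heapIdx r = 3 * 2 ^ (l - 1) + leafIdx l r := by
      intro r hr h
      rw [heapIdx_eq, (leaf_iff hl r hr).2 h, leafIdx]; ring
    have kp := key p hp
    have kq := key q hq
    constructor
    · rintro (h | ⟨h1, h2, h⟩)
      · exact Or.inl ⟨h3, h⟩
      · have := kp h1
        have := kq h2
        omega
    · rintro (h | ⟨h1, h2, h⟩)
      · exact Or.inl h.2
      · have := kp h1
        have := kq h2
        omega

/-! ### Colorings described by heap numbers -/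

/-- The three edges at the vertex with number `n`, as pairs of a color and the number of the other
end, when `up m` is the color of the edge from `m` to its parent and `cyc m` is the color of the
edge from the leaf `m` to the next leaf. -/
def links (L : ℕ) (up cyc : ℕ → ℕ) (n : ℕ) : List (ℕ × ℕ) :=
  if n = 1 then [(up 3, 3), (up 4, 4), (up 5, 5)]
  else if n < L then [(up n, heapParent n), (up (2 * n), 2 * n), (up (2 * n + 1), 2 * n + 1)]
  else
    let prev := if n = L then 2 * L - 1 else n - 1
    [(up n, heapParent n), (cyc prev, prev), (cyc n, if n + 1 = 2 * L then L else n + 1)]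

theorem mem_links_iff {L n m : ℕ} (hL : 3 ≤ L) (up cyc : ℕ → ℕ) (hn : IsHeapNum L n) :
    (∃ c, (c, m) ∈ links L up cyc n) ↔
      IsHeapNum L m ∧ n ≠ m ∧ (HeapRel L n m ∨ HeapRel L m n) := by
  unfold links
  split_ifs with h1 h2
  · simp only [List.mem_cons, List.not_mem_nil, Prod.mk.injEq, or_false, exists_or,
      exists_eq_left, IsHeapNum, HeapRel, heapParent] at *
    split_ifs <;> omega
  · simp only [List.mem_cons, List.not_mem_nil, Prod.mk.injEq, or_false, exists_or,
      exists_eq_left, IsHeapNum, HeapRel, heapParent] at *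
    split_ifs <;> omega
  all_goals
    simp only [List.mem_cons, List.not_mem_nil, Prod.mk.injEq, or_false, exists_or,
      exists_eq_left, IsHeapNum, HeapRel, heapParent] at *
    split_ifs <;> omega

theorem completeHalin_adj_iff {l : ℕ} (hl : 1 ≤ l) (up cyc : ℕ → ℕ) (v w : HalinVert l) :
    (completeHalin l).Adj v w ↔
      ∃ c, (c, heapNum w) ∈ links (3 * 2 ^ (l - 1)) up cyc (heapNum v) := by
  have hL : 0 < 2 ^ (l - 1) := by positivity
  rw [mem_links_iff (by omega) up cyc (isHeapNum_heapNum hl v), completeHalin,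
    SimpleGraph.fromRel_adj, halinRel_iff hl, halinRel_iff hl, heapNum_injective.ne_iff]
  simp [isHeapNum_heapNum hl w]

def edgeColor (up cyc : ℕ → ℕ) (e : Sym2 ℕ) : ℕ :=
  if e.inf = heapParent e.sup then up e.sup
  else if e.sup = e.inf + 1 then cyc e.inf else cyc e.sup

theorem edgeColor_eq {L n m c : ℕ} (hL : 3 ≤ L) {up cyc : ℕ → ℕ} (hn : IsHeapNum L n)
    (h : (c, m) ∈ links L up cyc n) : edgeColor up cyc s(n, m) = c := by
  have low : ∀ {a b : ℕ}, 3 ≤ b → a = heapParent b → edgeColor up cyc s(a, b) = up b := by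
    intro a b hb hab
    have : a ≤ b := by rw [hab, heapParent]; split_ifs <;> omega
    simp only [edgeColor, Sym2.inf_mk, Sym2.sup_mk, inf_eq_left.2 this, sup_eq_right.2 this]
    rw [if_pos hab]
  have next : ∀ {a b : ℕ}, 3 ≤ a → b = a + 1 → edgeColor up cyc s(a, b) = cyc a := by
    intro a b ha hab
    have hle : a ≤ b := by omega
    simp only [edgeColor, Sym2.inf_mk, Sym2.sup_mk, inf_eq_left.2 hle, sup_eq_right.2 hle]
    rw [if_neg (by rw [heapParent]; split_ifs <;> omega), if_pos hab]
  have wrap : ∀ {a b : ℕ}, a = L → b = 2 * L - 1 → edgeColor up cyc s(a, b) = cyc b := by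
    intro a b ha hb
    have hle : a ≤ b := by omega
    simp only [edgeColor, Sym2.inf_mk, Sym2.sup_mk, inf_eq_left.2 hle, sup_eq_right.2 hle]
    rw [if_neg (by rw [heapParent]; split_ifs <;> omega), if_neg (by omega)]
  unfold links at h
  unfold IsHeapNum at hn
  split_ifs at h with h1 h2 h3 h4 h4 <;>
    simp only [List.mem_cons, List.not_mem_nil, Prod.mk.injEq, or_false] at h <;>
    rcases h with ⟨rfl, rfl⟩ | ⟨rfl, rfl⟩ | ⟨rfl, rfl⟩
  all_goals first
    | exact low (by omega) (by rw [heapParent]; split_ifs <;> omega)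
    | (rw [Sym2.eq_swap]; exact low (by omega) rfl)
    | exact next (by omega) (by omega)
    | (rw [Sym2.eq_swap]; exact next (by omega) (by omega))
    | exact wrap (by omega) (by omega)
    | (rw [Sym2.eq_swap]; exact wrap (by omega) (by omega))

/-- The condition on two edges with a common end that have the given colors and whose other ends
see the given lists of colors. -/
def PairOk (p q : ℕ × List ℕ) : Prop := p.1 ≠ q.1 ∧ (q.1 ∉ p.2 ∨ p.1 ∉ q.2)

instance (p q : ℕ × List ℕ) : Decidable (PairOk p q) := inferInstanceAs (Decidable (_ ∧ _))

theorem PairOk.symm {p q : ℕ × List ℕ} (h : PairOk p q) : PairOk q p := ⟨h.1.symm, h.2.symm⟩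

/-- The condition at a vertex seeing the colors in `S`, where `env` lists its edges by their color
and the colors seen by the other end. -/
def LocalOk (S : List ℕ) (env : List (ℕ × List ℕ)) : Prop :=
  env.Pairwise PairOk ∧ ∀ p ∈ env, p.1 < 5 ∧ p.1 ∈ S

instance (S : List ℕ) (env : List (ℕ × List ℕ)) : Decidable (LocalOk S env) :=
  inferInstanceAs (Decidable (_ ∧ _))

def env (L : ℕ) (up cyc : ℕ → ℕ) (K : ℕ → List ℕ) (n : ℕ) : List (ℕ × List ℕ) :=
  (links L up cyc n).map fun p => (p.1, K p.2)

theorem exists_isStarEdgeColoring_of_localOk {l : ℕ} (hl : 1 ≤ l) (up cyc : ℕ → ℕ)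
    (K : ℕ → List ℕ)
    (h : ∀ n, IsHeapNum (3 * 2 ^ (l - 1)) n → LocalOk (K n) (env (3 * 2 ^ (l - 1)) up cyc K n)) :
    ∃ c : Sym2 (HalinVert l) → ℕ, IsStarEdgeColoring (completeHalin l) 5 c := by
  have hL : 0 < 2 ^ (l - 1) := by positivity
  have mem : ∀ {v w : HalinVert l}, (completeHalin l).Adj v w →
      (edgeColor up cyc (Sym2.map heapNum s(v, w)), heapNum w) ∈
        links (3 * 2 ^ (l - 1)) up cyc (heapNum v) := by
    intro v w hvw
    obtain ⟨c, hc⟩ := (completeHalin_adj_iff hl up cyc v w).1 hvw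
    rwa [Sym2.map_mk, edgeColor_eq (by omega) (isHeapNum_heapNum hl v) hc]
  refine ⟨fun e => edgeColor up cyc (e.map heapNum),
    isStarEdgeColoring_of_local (fun v => K (heapNum v)) ?_ ?_⟩
  · intro v w hvw
    exact (h _ (isHeapNum_heapNum hl v)).2 _ (List.mem_map_of_mem (mem hvw))
  · intro v x y hx hy hxy
    have : Std.Symm fun p q : ℕ × ℕ => PairOk (p.1, K p.2) (q.1, K q.2) := ⟨fun _ _ => PairOk.symm⟩
    have hp := List.pairwise_map.1 (h _ (isHeapNum_heapNum hl v)).1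
    exact hp.forall (mem hx) (mem hy)
      fun heq => hxy (heapNum_injective (Prod.ext_iff.1 heq).2)

/-! ### The lower bound -/

theorem exists_three_neighbors {l : ℕ} (hl : 1 ≤ l) (v : HalinVert l) :
    ∃ x y z, (completeHalin l).Adj v x ∧ (completeHalin l).Adj v y ∧ (completeHalin l).Adj v z ∧
      x ≠ y ∧ x ≠ z ∧ y ≠ z := by
  have hL : 0 < 2 ^ (l - 1) := by positivity
  have hv := isHeapNum_heapNum hl v
  obtain ⟨a, b, d, hlinks, hab, had, hbd⟩ : ∃ a b d : ℕ,
      links (3 * 2 ^ (l - 1)) 0 0 (heapNum v) = [(0, a), (0, b), (0, d)] ∧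
        a ≠ b ∧ a ≠ d ∧ b ≠ d := by
    unfold links heapParent
    unfold IsHeapNum at hv
    split_ifs <;> refine ⟨_, _, _, rfl, ?_, ?_, ?_⟩ <;> omega
  have nbr : ∀ m, (0, m) ∈ links (3 * 2 ^ (l - 1)) 0 0 (heapNum v) →
      ∃ w, heapNum w = m ∧ (completeHalin l).Adj v w := by
    intro m hm
    obtain ⟨w, rfl⟩ :=
      exists_heapNum_eq hl ((mem_links_iff (by omega) 0 0 hv).1 ⟨0, hm⟩).1
    exact ⟨w, rfl, (completeHalin_adj_iff hl 0 0 v w).2 ⟨0, hm⟩⟩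
  obtain ⟨x, rfl, hx⟩ := nbr a (by simp [hlinks])
  obtain ⟨y, rfl, hy⟩ := nbr b (by simp [hlinks])
  obtain ⟨z, rfl, hz⟩ := nbr d (by simp [hlinks])
  exact ⟨x, y, z, hx, hy, hz, fun h => hab (h ▸ rfl), fun h => had (h ▸ rfl),
    fun h => hbd (h ▸ rfl)⟩

theorem exists_triangle {l : ℕ} (hl : 1 ≤ l) : ∃ a b d, (completeHalin l).Adj a b ∧
    (completeHalin l).Adj b d ∧ (completeHalin l).Adj d a := by
  have hL : 0 < 2 ^ (l - 1) := by positivity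
  have heven : 2 ^ (l - 1) % 2 = 0 ∨ 2 ^ (l - 1) = 1 := by
    rcases Nat.eq_zero_or_pos (l - 1) with h | h
    · simp [h]
    · exact Or.inl (Nat.mod_eq_zero_of_dvd (dvd_pow_self 2 h.ne'))
  have adj : ∀ v w : HalinVert l, (completeHalin l).Adj v w ↔ heapNum v ≠ heapNum w ∧
      (HeapRel (3 * 2 ^ (l - 1)) (heapNum v) (heapNum w) ∨
        HeapRel (3 * 2 ^ (l - 1)) (heapNum w) (heapNum v)) := by
    intro v w
    rw [completeHalin, SimpleGraph.fromRel_adj, halinRel_iff hl, halinRel_iff hl,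
      heapNum_injective.ne_iff]
  obtain ⟨P, hP, hP', h⟩ : ∃ P, heapParent (3 * 2 ^ (l - 1)) = P ∧
      heapParent (3 * 2 ^ (l - 1) + 1) = P ∧ (P = 1 ∨ 3 ≤ P ∧ P < 3 * 2 ^ (l - 1)) := by
    refine ⟨_, rfl, ?_⟩
    unfold heapParent
    split_ifs <;> omega
  obtain ⟨a, ha⟩ := exists_heapNum_eq (n := P) hl (by unfold IsHeapNum; omega)
  obtain ⟨b, hb⟩ := exists_heapNum_eq (n := 3 * 2 ^ (l - 1)) hl (by unfold IsHeapNum; omega)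
  obtain ⟨d, hd⟩ := exists_heapNum_eq (n := 3 * 2 ^ (l - 1) + 1) hl (by unfold IsHeapNum; omega)
  refine ⟨a, b, d, ?_, ?_, ?_⟩ <;> rw [adj] <;>
    simp only [ha, hb, hd, HeapRel, hP, hP', and_true, true_or] <;> omega

/-! ### The coloring for `l ≤ 3` -/

theorem exists_isStarEdgeColoring_of_table {l : ℕ} (hl : 1 ≤ l) (up cyc : ℕ → ℕ)
    (h : ∀ n < 2 * (3 * 2 ^ (l - 1)), IsHeapNum (3 * 2 ^ (l - 1)) n →
      LocalOk ((links (3 * 2 ^ (l - 1)) up cyc n).map Prod.fst)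
        (env (3 * 2 ^ (l - 1)) up cyc
          (fun m => (links (3 * 2 ^ (l - 1)) up cyc m).map Prod.fst) n)) :
    ∃ c : Sym2 (HalinVert l) → ℕ, IsStarEdgeColoring (completeHalin l) 5 c := by
  have hL : 0 < 2 ^ (l - 1) := by positivity
  refine exists_isStarEdgeColoring_of_localOk hl up cyc _ fun n hn => h n ?_ hn
  unfold IsHeapNum at hn
  omega

theorem exists_isStarEdgeColoring_of_le_three {l : ℕ} (hl : 1 ≤ l) (h3 : l ≤ 3) :
    ∃ c : Sym2 (HalinVert l) → ℕ, IsStarEdgeColoring (completeHalin l) 5 c := by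
  interval_cases l
  · refine exists_isStarEdgeColoring_of_table le_rfl
      (fun n => [0, 2, 3].getD (n - 3) 0) (fun n => [1, 0, 4].getD (n - 3) 0) ?_
    decide +kernel
  · refine exists_isStarEdgeColoring_of_table (by norm_num)
      (fun n => [0, 1, 2, 1, 3, 2, 3, 4, 3].getD (n - 3) 0)
      (fun n => [2, 0, 4, 1, 0, 4].getD (n - 6) 0) ?_
    decide +kernel
  · refine exists_isStarEdgeColoring_of_table (by norm_num)
      (fun n =>
        [0, 1, 2, 1, 2, 2, 3, 3, 4, 2, 3, 4, 3, 4, 3, 0, 4, 0, 2, 0, 1].getD (n - 3) 0)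
      (fun n => [0, 1, 0, 2, 0, 1, 2, 3, 1, 4, 3, 4].getD (n - 12) 0) ?_
    decide +kernel

/-! ### The coloring for `4 ≤ l`

The vertices above height 3 are colored from the root down in such a way that the two edges from a
vertex to its children avoid all colors seen by its parent. The state `(a, d, e)` of a vertex
consists of the color `a` of the edge to its parent and the colors `d`, `e` of the edges to its
children. The block below a vertex of height 3 is colored by a table depending only on the state
of that vertex; color `0` is used between neighboring blocks, where the last leaf of each
block sees the colors `0, 1, 2` and the first leaf sees `0, 3, 4`. -/

abbrev State := ℕ × ℕ × ℕ

def State.Valid (s : State) : Prop :=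
  s ∈ (List.range 5) ×ˢ ((List.range 5) ×ˢ (List.range 5)) ∧
    s.1 ≠ s.2.1 ∧ s.1 ≠ s.2.2 ∧ s.2.1 < s.2.2

instance (s : State) : Decidable s.Valid := inferInstanceAs (Decidable (_ ∧ _))

def State.colors (s : State) : List ℕ := [s.1, s.2.1, s.2.2]

/-- The colors seen by the parent of a vertex with state `s`. -/
def State.parentColors (s : State) : List ℕ := (List.range 5).filter (· ∉ [s.2.1, s.2.2])

/-- The state of the child number `r` of a vertex with state `s`. -/
def State.child (s : State) (r : ℕ) : State :=
  let rest := (List.range 5).filter (· ∉ s.colors)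
  (if r = 0 then s.2.1 else s.2.2, rest.getD 0 0, rest.getD 1 0)

def nodeState (n : ℕ) : State :=
  if n < 6 then (n - 3, 3, 4) else (nodeState (n / 2)).child (n % 2)

theorem State.forall_valid {p : State → Prop}
    (h : ∀ s ∈ (List.range 5) ×ˢ ((List.range 5) ×ˢ (List.range 5)), State.Valid s → p s)
    {s : State} (hs : s.Valid) : p s := h s hs.1 hs

/-- The colors in a block with top state `(a, d, e)`: first the colors of the edges from the
vertices `4, …, 15` of the block, numbered as in a heap with top `1`, to their parents, then the
colors of the seven edges between consecutive leaves. -/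
def blockTable : State → List ℕ
  | (0, 1, 2) => [0, 2, 0, 3, 3, 2, 4, 3, 4, 1, 4, 2, 4, 1, 0, 1, 2, 3, 1]
  | (0, 1, 3) => [0, 2, 0, 1, 3, 2, 3, 1, 1, 2, 4, 2, 4, 1, 0, 4, 3, 0, 1]
  | (0, 1, 4) => [0, 2, 0, 1, 3, 2, 3, 1, 1, 3, 3, 2, 4, 1, 0, 4, 2, 4, 1]
  | (0, 2, 3) => [0, 1, 0, 1, 3, 1, 3, 2, 1, 2, 4, 2, 4, 2, 0, 4, 3, 0, 1]
  | (0, 2, 4) => [0, 1, 0, 1, 3, 1, 3, 2, 1, 2, 3, 2, 4, 2, 0, 4, 3, 0, 1]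
  | (0, 3, 4) => [0, 1, 0, 1, 4, 1, 3, 4, 2, 3, 3, 2, 3, 2, 0, 1, 0, 4, 1]
  | (1, 0, 2) => [1, 2, 1, 3, 3, 2, 3, 4, 3, 0, 0, 2, 4, 0, 1, 0, 2, 4, 1]
  | (1, 0, 3) => [1, 2, 0, 1, 3, 2, 3, 0, 1, 2, 4, 2, 4, 0, 1, 4, 3, 0, 1]
  | (1, 0, 4) => [1, 2, 0, 1, 3, 2, 3, 0, 1, 3, 3, 2, 4, 0, 1, 4, 2, 4, 1]
  | (1, 2, 3) => [0, 1, 0, 1, 3, 1, 3, 4, 2, 4, 4, 2, 4, 2, 0, 1, 0, 3, 1]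
  | (1, 2, 4) => [0, 1, 0, 1, 3, 1, 3, 4, 2, 3, 3, 2, 4, 2, 0, 1, 0, 4, 1]
  | (1, 3, 4) => [0, 1, 0, 1, 4, 1, 4, 2, 3, 2, 3, 2, 3, 2, 0, 1, 0, 4, 1]
  | (2, 0, 1) => [1, 2, 2, 3, 3, 2, 3, 4, 0, 3, 4, 1, 4, 0, 1, 2, 1, 0, 2]
  | (2, 0, 3) => [1, 2, 0, 1, 3, 0, 3, 1, 4, 1, 4, 2, 4, 2, 0, 3, 2, 3, 1]
  | (2, 0, 4) => [1, 2, 0, 1, 3, 0, 3, 1, 1, 3, 3, 2, 4, 2, 0, 4, 2, 4, 1]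
  | (2, 1, 3) => [0, 2, 0, 1, 3, 1, 3, 4, 2, 4, 4, 2, 4, 2, 0, 1, 0, 3, 1]
  | (2, 1, 4) => [0, 2, 0, 1, 3, 1, 3, 4, 2, 3, 3, 2, 4, 2, 0, 1, 0, 4, 1]
  | (2, 3, 4) => [0, 1, 0, 1, 4, 1, 3, 4, 2, 3, 3, 2, 3, 2, 0, 1, 0, 4, 1]
  | (3, 0, 1) => [1, 2, 2, 3, 3, 2, 3, 0, 0, 1, 0, 2, 4, 0, 1, 4, 3, 4, 1]
  | (3, 0, 2) => [1, 2, 1, 3, 3, 0, 3, 1, 0, 2, 0, 1, 4, 2, 0, 4, 3, 4, 2]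
  | (3, 0, 4) => [1, 2, 0, 1, 3, 0, 3, 1, 1, 3, 3, 2, 4, 2, 0, 4, 2, 4, 1]
  | (3, 1, 2) => [0, 2, 0, 3, 3, 1, 3, 4, 2, 1, 4, 1, 4, 2, 0, 1, 3, 0, 2]
  | (3, 1, 4) => [0, 2, 0, 1, 3, 1, 3, 1, 1, 3, 3, 2, 4, 2, 0, 4, 2, 4, 1]
  | (3, 2, 4) => [0, 1, 0, 1, 3, 1, 3, 2, 1, 2, 3, 2, 4, 2, 0, 4, 3, 0, 1]
  | (4, 0, 1) => [1, 2, 2, 3, 3, 2, 3, 0, 0, 3, 4, 1, 4, 0, 1, 4, 1, 0, 2]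
  | (4, 0, 2) => [1, 2, 1, 3, 3, 0, 3, 1, 2, 3, 4, 2, 4, 2, 0, 3, 4, 0, 1]
  | (4, 0, 3) => [1, 2, 0, 1, 3, 0, 3, 1, 4, 1, 4, 2, 4, 2, 0, 3, 2, 3, 1]
  | (4, 1, 2) => [0, 2, 0, 3, 3, 1, 3, 4, 2, 1, 4, 1, 4, 2, 0, 1, 3, 0, 2]
  | (4, 1, 3) => [0, 2, 0, 1, 3, 1, 3, 1, 4, 1, 4, 2, 4, 2, 0, 3, 2, 3, 1]
  | (4, 2, 3) => [0, 1, 0, 1, 3, 1, 3, 2, 1, 2, 4, 2, 4, 2, 0, 4, 3, 0, 1]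
  | _ => []

def blockUp (s : State) (i : ℕ) : ℕ :=
  if i = 1 then s.1 else if i = 2 then s.2.1 else if i = 3 then s.2.2
  else (blockTable s).getD (i - 4) 0

def blockCyc (s : State) (i : ℕ) : ℕ :=
  if i = 15 then 0 else (blockTable s).getD (i + 4) 0

def blockColors (s : State) (i : ℕ) : List ℕ :=
  if i < 8 then [blockUp s i, blockUp s (2 * i), blockUp s (2 * i + 1)]
  else if i = 8 then [0, 3, 4]
  else if i = 15 then [0, 1, 2]
  else [blockUp s i, blockCyc s (i - 1), blockCyc s i]

/-- The edges at the vertex `i` of a block with top state `s`, as in `LocalOk`. -/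
def blockEnv (s : State) (i : ℕ) : List (ℕ × List ℕ) :=
  (blockUp s i, if i = 1 then s.parentColors else blockColors s (i / 2)) ::
    if i < 8 then
      [(blockUp s (2 * i), blockColors s (2 * i)),
        (blockUp s (2 * i + 1), blockColors s (2 * i + 1))]
    else
      [if i = 8 then (0, [0, 1, 2]) else (blockCyc s (i - 1), blockColors s (i - 1)),
        (blockCyc s i, if i = 15 then [0, 3, 4] else blockColors s (i + 1))]

theorem localOk_blockEnv {s : State} (hs : s.Valid) :
    ∀ i < 16, 1 ≤ i → LocalOk (blockColors s i) (blockEnv s i) :=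
  State.forall_valid
    (p := fun s => ∀ i < 16, 1 ≤ i → LocalOk (blockColors s i) (blockEnv s i))
    (by decide +kernel) hs

/-- The edges at a vertex with state `s` that lies above height 3. -/
def treeEnv (s : State) : List (ℕ × List ℕ) :=
  [(s.1, s.parentColors), (s.2.1, (s.child 0).colors), (s.2.2, (s.child 1).colors)]

theorem localOk_treeEnv {s : State} (hs : s.Valid) : LocalOk s.colors (treeEnv s) :=
  State.forall_valid (p := fun s => LocalOk s.colors (treeEnv s)) (by decide +kernel) hs

theorem child_spec {s : State} (hs : s.Valid) : ∀ r < 2, (s.child r).Valid ∧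
    ∀ x ∈ s.colors, x ∈ (s.child r).parentColors :=
  State.forall_valid (p := fun s => ∀ r < 2, (s.child r).Valid ∧
    ∀ x ∈ s.colors, x ∈ (s.child r).parentColors) (by decide +kernel) hs

theorem nodeState_of_lt_six {n : ℕ} (hn : n < 6) : nodeState n = (n - 3, 3, 4) := by
  rw [nodeState, if_pos hn]

theorem nodeState_two_mul_add {n r : ℕ} (hn : 3 ≤ n) (hr : r < 2) :
    nodeState (2 * n + r) = (nodeState n).child r := by
  rw [nodeState, if_neg (by omega), show (2 * n + r) / 2 = n by omega,
    show (2 * n + r) % 2 = r by omega]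

theorem nodeState_spec {n : ℕ} (hn : 3 ≤ n) : (nodeState n).Valid ∧
    ∀ x ∈ (if n < 6 then [0, 1, 2] else (nodeState (n / 2)).colors),
      x ∈ (nodeState n).parentColors := by
  induction n using Nat.strong_induction_on with
  | _ n ih =>
    by_cases h6 : n < 6
    · rw [nodeState_of_lt_six h6, if_pos h6]
      interval_cases n <;> decide
    · rw [nodeState, if_neg h6, if_neg h6]
      exact child_spec (ih (n / 2) (by omega) (by omega)).1 (n % 2) (by omega)

theorem LocalOk.mono {S K K' : List ℕ} {c : ℕ} {t : List (ℕ × List ℕ)}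
    (h : LocalOk S ((c, K) :: t)) (hK : ∀ x ∈ K', x ∈ K) : LocalOk S ((c, K') :: t) := by
  obtain ⟨h1, h2⟩ := h
  rw [List.pairwise_cons] at h1
  rw [List.forall_mem_cons] at h2
  refine ⟨List.pairwise_cons.2 ⟨fun q hq => ?_, h1.2⟩, List.forall_mem_cons.2 h2⟩
  exact ⟨(h1.1 q hq).1, (h1.1 q hq).2.imp_left fun h h' => h (hK _ h')⟩

/-- The heap number of the vertex `i` in the block with top `m`. -/
def blockVert (m i : ℕ) : ℕ :=
  if i < 2 then m else if i < 4 then 2 * m + (i - 2)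
  else if i < 8 then 4 * m + (i - 4) else 8 * m + (i - 8)

/-- For leaves starting at `8 * N`, the top of the block of `n` and the index of `n` in it. Vertices
above the blocks are treated like tops of blocks. -/
def blockPos (N n : ℕ) : ℕ × ℕ :=
  if n < 2 * N then (n, 1) else if n < 4 * N then (n / 2, 2 + n % 2)
  else if n < 8 * N then (n / 4, 4 + n % 4) else (n / 8, 8 + n % 8)

def upColor (N n : ℕ) : ℕ := blockUp (nodeState (blockPos N n).1) (blockPos N n).2

def cycColor (n : ℕ) : ℕ := blockCyc (nodeState (n / 8)) (8 + n % 8)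

def vertColors (N n : ℕ) : List ℕ :=
  if n = 1 then [0, 1, 2] else blockColors (nodeState (blockPos N n).1) (blockPos N n).2

theorem blockPos_blockVert {N m i : ℕ} (hm : N ≤ m) (hm' : m < 2 * N) (hi : 1 ≤ i) (hi' : i < 16) :
    blockPos N (blockVert m i) = (m, i) := by
  unfold blockPos blockVert
  split_ifs <;> first | omega | (rw [Prod.mk.injEq]; omega)

theorem exists_blockVert_eq {N n : ℕ} (hn : N ≤ n) (hn' : n < 16 * N) :
    ∃ m i, N ≤ m ∧ m < 2 * N ∧ 1 ≤ i ∧ i < 16 ∧ blockVert m i = n := by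
  unfold blockVert
  by_cases h1 : n < 2 * N
  · exact ⟨n, 1, by split_ifs <;> omega⟩
  by_cases h2 : n < 4 * N
  · exact ⟨n / 2, 2 + n % 2, by split_ifs <;> omega⟩
  by_cases h3 : n < 8 * N
  · exact ⟨n / 4, 4 + n % 4, by split_ifs <;> omega⟩
  · exact ⟨n / 8, 8 + n % 8, by split_ifs <;> omega⟩

section Block

variable {N m i : ℕ}

theorem upColor_blockVert (hm : N ≤ m) (hm' : m < 2 * N) (hi : 1 ≤ i) (hi' : i < 16) :
    upColor N (blockVert m i) = blockUp (nodeState m) i := by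
  rw [upColor, blockPos_blockVert hm hm' hi hi']

theorem vertColors_blockVert (hN : 3 ≤ N) (hm : N ≤ m) (hm' : m < 2 * N) (hi : 1 ≤ i)
    (hi' : i < 16) : vertColors N (blockVert m i) = blockColors (nodeState m) i := by
  rw [vertColors, if_neg (by unfold blockVert; split_ifs <;> omega),
    blockPos_blockVert hm hm' hi hi']

theorem cycColor_blockVert (hi : 8 ≤ i) (hi' : i < 16) :
    cycColor (blockVert m i) = blockCyc (nodeState m) i := by
  rw [cycColor, show blockVert m i / 8 = m by unfold blockVert; split_ifs <;> omega,
    show 8 + blockVert m i % 8 = i by unfold blockVert; split_ifs <;> omega]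

end Block

theorem upColor_of_lt {N n : ℕ} (hn : n < 2 * N) : upColor N n = (nodeState n).1 := by
  rw [upColor, blockPos, if_pos hn, blockUp, if_pos rfl]

theorem vertColors_of_lt {N n : ℕ} (hn : n < 2 * N) (h1 : n ≠ 1) :
    vertColors N n = (nodeState n).colors := by
  rw [vertColors, if_neg h1, blockPos, if_pos hn]
  rfl

theorem vertColors_heapParent {N n : ℕ} (hn : n < 2 * N) :
    vertColors N (heapParent n) = if n < 6 then [0, 1, 2] else (nodeState (n / 2)).colors := by
  unfold heapParent
  split_ifs with h6
  · rfl
  · exact vertColors_of_lt (by omega) (by omega)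

theorem localOk_env_root {N : ℕ} (hN : 3 ≤ N) :
    LocalOk (vertColors N 1) (env (8 * N) (upColor N) cycColor (vertColors N) 1) := by
  rw [env, links, if_pos rfl]
  simp only [List.map_cons, List.map_nil]
  rw [upColor_of_lt (by omega), upColor_of_lt (by omega), upColor_of_lt (by omega),
    vertColors_of_lt (n := 3) (by omega) (by omega),
    vertColors_of_lt (n := 4) (by omega) (by omega),
    vertColors_of_lt (n := 5) (by omega) (by omega), vertColors, if_pos rfl]
  rw [nodeState_of_lt_six (n := 3) (by omega), nodeState_of_lt_six (n := 4) (by omega),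
    nodeState_of_lt_six (n := 5) (by omega)]
  decide

theorem localOk_env_tree {N n : ℕ} (h3 : 3 ≤ n) (hn : n < N) :
    LocalOk (vertColors N n) (env (8 * N) (upColor N) cycColor (vertColors N) n) := by
  rw [env, links, if_neg (by omega), if_pos (by omega)]
  simp only [List.map_cons, List.map_nil]
  obtain ⟨hv, hp⟩ := nodeState_spec h3
  rw [upColor_of_lt (by omega), upColor_of_lt (by omega), upColor_of_lt (by omega),
    vertColors_of_lt (by omega) (by omega), vertColors_of_lt (n := 2 * n) (by omega) (by omega),
    vertColors_of_lt (n := 2 * n + 1) (by omega) (by omega),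
    vertColors_heapParent (by omega), nodeState_two_mul_add h3 (by omega),
    ← Nat.add_zero (2 * n), nodeState_two_mul_add h3 (by omega)]
  exact (localOk_treeEnv hv).mono hp

theorem vertColors_of_eight_dvd {N n : ℕ} (hN : 3 ≤ N) (hn : 8 * N ≤ n) (h8 : n % 8 = 0) :
    vertColors N n = [0, 3, 4] := by
  rw [vertColors, if_neg (by omega), blockPos, if_neg (by omega), if_neg (by omega),
    if_neg (by omega), h8]
  rfl

theorem vertColors_of_mod_eight_eq_seven {N n : ℕ} (hN : 3 ≤ N) (hn : 8 * N ≤ n)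
    (h8 : n % 8 = 7) : vertColors N n = [0, 1, 2] := by
  rw [vertColors, if_neg (by omega), blockPos, if_neg (by omega), if_neg (by omega),
    if_neg (by omega), h8]
  rfl

theorem cycColor_of_mod_eight_eq_seven {n : ℕ} (h8 : n % 8 = 7) : cycColor n = 0 := by
  rw [cycColor, h8]
  rfl

theorem localOk_env_block {N n : ℕ} (hN : 3 ≤ N) (hn : N ≤ n) (hn' : n < 16 * N) :
    LocalOk (vertColors N n) (env (8 * N) (upColor N) cycColor (vertColors N) n) := by
  obtain ⟨m, i, hm, hm', hi, hi', rfl⟩ := exists_blockVert_eq hn hn'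
  obtain ⟨hv, hp⟩ := nodeState_spec (hN.trans hm)
  have key := localOk_blockEnv hv i hi' hi
  rw [vertColors_blockVert hN hm hm' hi hi', env, links,
    if_neg (by unfold blockVert; split_ifs <;> omega)]
  by_cases h8 : i < 8
  · rw [if_pos (by unfold blockVert; split_ifs <;> omega),
      show 2 * blockVert m i = blockVert m (2 * i) by unfold blockVert; split_ifs <;> omega,
      show blockVert m (2 * i) + 1 = blockVert m (2 * i + 1) by
        unfold blockVert; split_ifs <;> omega]
    simp only [List.map_cons, List.map_nil]
    rw [upColor_blockVert hm hm' hi hi', upColor_blockVert hm hm' (by omega) (by omega),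
      upColor_blockVert hm hm' (by omega) (by omega),
      vertColors_blockVert hN hm hm' (i := 2 * i) (by omega) (by omega),
      vertColors_blockVert hN hm hm' (i := 2 * i + 1) (by omega) (by omega)]
    rw [blockEnv, if_pos h8] at key
    split_ifs at key with h1
    · refine key.mono ?_
      rw [h1, show blockVert m 1 = m from rfl, vertColors_heapParent hm']
      exact hp
    · rwa [show heapParent (blockVert m i) = blockVert m (i / 2) by
        unfold blockVert heapParent; split_ifs <;> omega,
        vertColors_blockVert hN hm hm' (by omega) (by omega)]
  · have hb : blockVert m i = 8 * m + (i - 8) := by unfold blockVert; split_ifs <;> omega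
    rw [if_neg (by omega)]
    simp only [List.map_cons, List.map_nil]
    rw [blockEnv, if_neg h8, if_neg (by omega)] at key
    rw [upColor_blockVert hm hm' hi hi', cycColor_blockVert (by omega) hi',
      show heapParent (blockVert m i) = blockVert m (i / 2) by
        unfold blockVert heapParent; split_ifs <;> omega,
      vertColors_blockVert hN hm hm' (by omega) (by omega)]
    convert key using 3
    · split_ifs with h1 h2 h2
      · rw [cycColor_of_mod_eight_eq_seven (by omega),
          vertColors_of_mod_eight_eq_seven hN (by omega) (by omega)]
      · omega
      · rw [cycColor_of_mod_eight_eq_seven (by omega),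
          vertColors_of_mod_eight_eq_seven hN (by omega) (by omega)]
      · rw [show blockVert m i - 1 = blockVert m (i - 1) by
          unfold blockVert; split_ifs <;> omega, cycColor_blockVert (by omega) (by omega),
          vertColors_blockVert hN hm hm' (by omega) (by omega)]
    · congr 2
      split_ifs with h1 h2 h2
      · exact vertColors_of_eight_dvd hN le_rfl (by omega)
      · omega
      · exact vertColors_of_eight_dvd hN (by omega) (by omega)
      · rw [show blockVert m i + 1 = blockVert m (i + 1) by
          unfold blockVert; split_ifs <;> omega,
          vertColors_blockVert hN hm hm' (by omega) (by omega)]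

theorem exists_isStarEdgeColoring_of_four_le {l : ℕ} (hl : 4 ≤ l) :
    ∃ c : Sym2 (HalinVert l) → ℕ, IsStarEdgeColoring (completeHalin l) 5 c := by
  obtain ⟨k, rfl⟩ := Nat.exists_eq_add_of_le hl
  have hk : 0 < 2 ^ k := by positivity
  have hL : 3 * 2 ^ (4 + k - 1) = 8 * (3 * 2 ^ k) := by
    rw [show 4 + k - 1 = k + 3 by omega, pow_add]; ring
  have hN : 3 ≤ 3 * 2 ^ k := by omega
  refine exists_isStarEdgeColoring_of_localOk (by omega) (upColor (3 * 2 ^ k)) cycColor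
    (vertColors (3 * 2 ^ k)) fun n hn => ?_
  rw [hL] at hn ⊢
  rcases hn with rfl | ⟨h3, hn⟩
  · exact localOk_env_root hN
  · rcases lt_or_ge n (3 * 2 ^ k) with h | h
    · exact localOk_env_tree h3 h
    · exact localOk_env_block hN h (by omega)

/-- For every `l ≥ 1`, the complete cubic Halin graph `G_l` has star chromatic index
exactly 5: it admits a star 5-edge coloring but no star 4-edge coloring. -/
theorem starChromaticIndex_completeHalin (l : ℕ) (hl : 1 ≤ l) :
    (∃ c : Sym2 (HalinVert l) → ℕ, IsStarEdgeColoring (completeHalin l) 5 c) ∧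
    ¬ ∃ c : Sym2 (HalinVert l) → ℕ, IsStarEdgeColoring (completeHalin l) 4 c := by
  refine ⟨?_, ?_⟩
  · rcases Nat.lt_or_ge 3 l with h | h
    · exact exists_isStarEdgeColoring_of_four_le h
    · exact exists_isStarEdgeColoring_of_le_three hl h
  · rintro ⟨c, hc⟩
    obtain ⟨a, b, d, hab, hbd, hda⟩ := exists_triangle hl
    exact not_isStarEdgeColoring_four_of_triangle (exists_three_neighbors hl) hab hbd hda c hc
end

section
/- The complete cubic Halin graph G_2 admits a star 5-edge coloring. -/
/-- Star edge colorings pull back along injective graph homomorphisms. -/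
theorem IsStarEdgeColoring.comap {V W : Type*} {G : SimpleGraph V} {H : SimpleGraph W} {k : ℕ}
    {c : Sym2 W → ℕ} (hc : IsStarEdgeColoring H k c) (f : V → W) (hf : Function.Injective f)
    (hom : ∀ u v, G.Adj u v → H.Adj (f u) (f v)) :
    IsStarEdgeColoring G k (fun e => c (e.map f)) := by
  obtain ⟨hlt, hproper, hpath, hcycle⟩ := hc
  refine ⟨?_, ?_, ?_, ?_⟩
  · intro e
    induction e with
    | h u v => exact fun h => hlt _ (hom u v h)
  · exact fun a b b' h h' hne => hproper _ _ _ (hom _ _ h) (hom _ _ h') (hf.ne hne)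
  · exact fun v0 v1 v2 v3 v4 hn h0 h1 h2 h3 => hpath _ _ _ _ _ (hn.map hf)
      (hom _ _ h0) (hom _ _ h1) (hom _ _ h2) (hom _ _ h3)
  · exact fun v0 v1 v2 v3 hn h0 h1 h2 h3 => hcycle _ _ _ _ (hn.map hf)
      (hom _ _ h0) (hom _ _ h1) (hom _ _ h2) (hom _ _ h3)

/-- The colors of the edges of `G_2`, with its vertices numbered level by level; the entry `5`
marks a pair of nonadjacent vertices. -/
def halinTwoColor : Fin 10 → Fin 10 → ℕ :=
  ![![5, 0, 1, 2, 5, 5, 5, 5, 5, 5],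
    ![0, 5, 5, 5, 1, 3, 5, 5, 5, 5],
    ![1, 5, 5, 5, 5, 5, 2, 3, 5, 5],
    ![2, 5, 5, 5, 5, 5, 5, 5, 0, 3],
    ![5, 1, 5, 5, 5, 4, 5, 5, 5, 2],
    ![5, 3, 5, 5, 4, 5, 0, 5, 5, 5],
    ![5, 5, 2, 5, 5, 0, 5, 4, 5, 5],
    ![5, 5, 3, 5, 5, 5, 4, 5, 1, 5],
    ![5, 5, 5, 0, 5, 5, 5, 1, 5, 4],
    ![5, 5, 5, 3, 2, 5, 5, 5, 4, 5]]

theorem halinTwoColor_comm : ∀ i j, halinTwoColor i j = halinTwoColor j i := by decide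

/-- The graph on `Fin 10` whose edges are the pairs colored by `halinTwoColor`. -/
def halinTwo : SimpleGraph (Fin 10) where
  Adj i j := halinTwoColor i j < 5
  symm := ⟨fun i j h => by rwa [halinTwoColor_comm]⟩
  loopless := ⟨by decide⟩

set_option synthInstance.maxSize 1000 in
theorem isStarEdgeColoring_halinTwo :
    IsStarEdgeColoring halinTwo 5 (Sym2.lift ⟨halinTwoColor, halinTwoColor_comm⟩) := by
  have hproper : ∀ a b, halinTwoColor a b < 5 → ∀ b', halinTwoColor a b' < 5 → b ≠ b' →
      halinTwoColor a b ≠ halinTwoColor a b' := by decide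
  have hpath : ∀ v0 v1, halinTwoColor v0 v1 < 5 → ∀ v2, halinTwoColor v1 v2 < 5 →
      v0 ≠ v2 → ∀ v3, halinTwoColor v2 v3 < 5 → v1 ≠ v3 → ∀ v4, halinTwoColor v3 v4 < 5 →
      v2 ≠ v4 → 3 ≤ ({halinTwoColor v0 v1, halinTwoColor v1 v2, halinTwoColor v2 v3,
        halinTwoColor v3 v4} : Finset ℕ).card := by
    decide +kernel
  refine ⟨?_, fun a b b' h h' => hproper a b h b' h', ?_, ?_⟩
  · intro e
    induction e with
    | h u v => exact id
  · intro v0 v1 v2 v3 v4 hn h0 h1 h2 h3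
    exact hpath v0 v1 h0 v2 h1 (by grind) v3 h2 (by grind) v4 h3 (by grind)
  · intro v0 v1 v2 v3 hn h0 h1 h2 h3
    exact hpath v0 v1 h0 v2 h1 (by grind) v3 h2 (by grind) v0 h3 (by grind)

/-- The level-by-level numbering of the vertices of `G_2`. -/
def halinTwoIndex : HalinVert 2 → Fin 10
  | none => 0
  | some ⟨(a, []), _⟩ => ⟨1 + a, by omega⟩
  | some ⟨(a, b :: _), _⟩ => ⟨4 + 2 * a + b, by omega⟩

theorem HalinVert.two_cases (v : HalinVert 2) :
    v = none ∨ (∃ a, v = some ⟨(a, []), by simp⟩) ∨ ∃ a b, v = some ⟨(a, [b]), by simp⟩ := by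
  rcases v with _ | ⟨⟨a, _ | ⟨b, _ | ⟨b', bs⟩⟩⟩, h⟩
  · simp
  · simp
  · simp
  · simp at h

theorem halinTwoIndex_injective : Function.Injective halinTwoIndex := by
  intro u v h
  rcases u.two_cases with rfl | ⟨a, rfl⟩ | ⟨a, b, rfl⟩ <;>
  rcases v.two_cases with rfl | ⟨a', rfl⟩ | ⟨a', b', rfl⟩ <;>
  simp only [halinTwoIndex, Fin.ext_iff, Fin.val_zero] at h <;> grind

theorem halinTwo_adj_of_halinRel (u v : HalinVert 2) (h : halinRel 2 u v) :
    halinTwo.Adj (halinTwoIndex u) (halinTwoIndex v) := by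
  rcases u.two_cases with rfl | ⟨a, rfl⟩ | ⟨a, b, rfl⟩ <;>
  rcases v.two_cases with rfl | ⟨a', rfl⟩ | ⟨a', b', rfl⟩ <;>
  simp [halinRel, leafIdx, binVal] at h <;>
  simp only [halinTwo, halinTwoIndex]
  · revert a'; decide
  · subst h; revert a' b'; decide
  · revert a b a' b'; decide

/-- The complete cubic Halin graph `G_2` admits a star 5-edge coloring. -/
theorem completeHalin_two_star5 :
    ∃ c : Sym2 (HalinVert 2) → ℕ, IsStarEdgeColoring (completeHalin 2) 5 c := by
  refine ⟨_, isStarEdgeColoring_halinTwo.comap halinTwoIndex halinTwoIndex_injective ?_⟩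
  rintro u v ⟨-, h | h⟩
  · exact halinTwo_adj_of_halinRel u v h
  · exact (halinTwo_adj_of_halinRel v u h).symm
end
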